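/- Let e be uniformly distributed on the unit sphere S^{d-1} ⊂ R^d and let h : R^d → R be continuously differentiable. Then for any x ∈ R^d and γ > 0, E[(d/γ) h(x + γe) e] = E[∇h(x + γu)], where u is uniformly distributed on the closed unit ball B^d(1). -/

import Mathlib

open MeasureTheory

/-- The uniform probability distribution on the unit sphere of `ℝ^d`, viewed as a measure on
`ℝ^d` (normalized surface measure). -/
noncomputable def sphereUniform (d : ℕ) : Measure (EuclideanSpace ℝ (Fin d)) :=
  (((volume : Measure (EuclideanSpace ℝ (Fin d))).toSphere) Set.univ)⁻¹ •
    ((volume : Measure (EuclideanSpace ℝ (Fin d))).toSphere).map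
      ((↑) : Metric.sphere (0 : EuclideanSpace ℝ (Fin d)) 1 → EuclideanSpace ℝ (Fin d))

/-- The uniform probability distribution on the closed unit ball of `ℝ^d`. -/
noncomputable def ballUniform (d : ℕ) : Measure (EuclideanSpace ℝ (Fin d)) :=
  ((volume : Measure (EuclideanSpace ℝ (Fin d))) (Metric.ball 0 1))⁻¹ •
    (volume : Measure (EuclideanSpace ℝ (Fin d))).restrict (Metric.ball 0 1)

/-!
Integrate `∂_v g` by parts against the tent `(R - ‖u‖)₊`, a Lipschitz cutoff whose derivative on
the ball `B_R` is `-D‖·‖`: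
`∫_{B_R} (R - ‖u‖) ∂_v g(u) du = ∫_{B_R} D‖·‖(u)v · g(u) du`.
With `a(r)` and `b(r)` the integrals of `∂_v g` and `D‖·‖v · g` over the sphere of radius `r`, polar
coordinates turn this into `∫₀ᴿ (R - r) a(r) dr = ∫₀ᴿ b(r) dr` for every `R > 0`. Differentiating in
`R` gives `∫₀ᴿ a(r) dr = b(R)`, the divergence theorem on `B_R`. For a Euclidean norm
`D‖·‖(e)v = ⟪e, v⟫` on the unit sphere, and the factor `d` comes from the ratio of the area of the
unit sphere to the volume of the unit ball.
-/

open Set Metric Module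

section PolarCoordinates

variable {E F : Type*} [NormedAddCommGroup E] [NormedSpace ℝ E] [FiniteDimensional ℝ E]
  [MeasurableSpace E] [BorelSpace E] [NormedAddCommGroup F] [NormedSpace ℝ F]

lemma integral_volumeIoiPow (n : ℕ) (f : ℝ → F) :
    ∫ r, f r ∂(Measure.volumeIoiPow n) = ∫ r in Ioi (0 : ℝ), r ^ n • f r := by
  rw [Measure.volumeIoiPow, integral_withDensity_eq_integral_toReal_smul (by fun_prop) (by simp),
    ← integral_subtype_comap measurableSet_Ioi]
  refine integral_congr_ae (.of_forall fun r ↦ ?_)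
  simp only [ENNReal.toReal_ofReal (pow_nonneg (mem_Ioi.1 r.2).le n)]

lemma continuous_integral_sphere_smul (μ : Measure E) {φ : sphere (0 : E) 1 → ℝ}
    (hφ : Integrable φ μ.toSphere) {f : E → F} (hf : Continuous f) :
    Continuous fun r : ℝ ↦ ∫ e, φ e • f (r • (e : E)) ∂μ.toSphere := by
  have hf' : Continuous (fun (r : ℝ) (e : sphere (0 : E) 1) ↦ f (r • (e : E))).uncurry := by
    fun_prop
  rw [← continuousOn_univ]
  exact continuousOn_integral_bilinear_of_locally_integrable_of_compact_support
    (ContinuousLinearMap.lsmul ℝ ℝ) isCompact_univ hf'.continuousOn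
    (fun _ e _ he ↦ absurd (mem_univ e) he) hφ.integrableOn

variable [Nontrivial E] (μ : Measure E) [μ.IsAddHaarMeasure]

theorem integral_eq_integral_Ioi_integral_sphere {f : E → F} (hf : Integrable f μ) :
    ∫ u, f u ∂μ =
      ∫ r in Ioi (0 : ℝ), r ^ (finrank ℝ E - 1) • ∫ e, f (r • (e : E)) ∂μ.toSphere := by
  have hpolar := μ.measurePreserving_homeomorphUnitSphereProd.symm
    (homeomorphUnitSphereProd E).toMeasurableEquiv
  have hemb := (homeomorphUnitSphereProd E).symm.measurableEmbedding
  have hf' : Integrable (fun u : ({0}ᶜ : Set E) ↦ f u) (μ.comap (↑)) :=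
    (integrableOn_iff_comap_subtypeVal (measurableSet_singleton 0).compl).1 hf.integrableOn
  have hint : Integrable (fun p : sphere (0 : E) 1 × Ioi (0 : ℝ) ↦ f (p.2.1 • (p.1 : E)))
      (μ.toSphere.prod (.volumeIoiPow (finrank ℝ E - 1))) := by
    simpa [Function.comp_def] using (hpolar.integrable_comp_emb hemb).2 hf'
  calc
    ∫ u, f u ∂μ = ∫ u : ({0}ᶜ : Set E), f u ∂(μ.comap (↑)) := by
      rw [integral_subtype_comap (measurableSet_singleton _).compl f, restrict_compl_singleton]
    _ = ∫ p : sphere (0 : E) 1 × Ioi (0 : ℝ), f (p.2.1 • (p.1 : E))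
        ∂μ.toSphere.prod (.volumeIoiPow (finrank ℝ E - 1)) := by
      simpa using (hpolar.integral_comp hemb fun u : ({0}ᶜ : Set E) ↦ f u).symm
    _ = ∫ r : Ioi (0 : ℝ), ∫ e, f (r.1 • (e : E)) ∂μ.toSphere
        ∂(.volumeIoiPow (finrank ℝ E - 1)) := integral_prod_symm _ hint
    _ = _ := integral_volumeIoiPow _ fun r ↦ ∫ e, f (r • (e : E)) ∂μ.toSphere

theorem setIntegral_ball_eq_integral_integral_sphere {f : E → F} {R : ℝ} (hR : 0 ≤ R)
    (hf : IntegrableOn f (ball 0 R) μ) :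
    ∫ u in ball 0 R, f u ∂μ =
      ∫ r in 0..R, r ^ (finrank ℝ E - 1) • ∫ e, f (r • (e : E)) ∂μ.toSphere := by
  rw [← integral_indicator measurableSet_ball, integral_eq_integral_Ioi_integral_sphere μ
      ((integrable_indicator_iff measurableSet_ball).2 hf),
    intervalIntegral.integral_of_le hR, ← setIntegral_congr_set Ioo_ae_eq_Ioc,
    ← Ioi_inter_Iio, ← setIntegral_indicator measurableSet_Iio]
  refine setIntegral_congr_fun measurableSet_Ioi fun r (hr : 0 < r) ↦ ?_
  by_cases hrR : r < R <;> simp [indicator, norm_smul, abs_of_pos hr, hrR]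

end PolarCoordinates

section TriangularKernel

variable {F : Type*} [NormedAddCommGroup F] [NormedSpace ℝ F] [CompleteSpace F] {a b : ℝ → F}

lemma hasDerivAt_integral_sub_smul (ha : Continuous a) (R : ℝ) :
    HasDerivAt (fun R ↦ ∫ r in 0..R, (R - r) • a r) (∫ r in 0..R, a r) R := by
  have hra : Continuous fun r ↦ r • a r := by fun_prop
  have hsplit (R : ℝ) :
      ∫ r in 0..R, (R - r) • a r = R • (∫ r in 0..R, a r) - ∫ r in 0..R, r • a r := by
    rw [← intervalIntegral.integral_smul, ← intervalIntegral.integral_sub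
      (by exact (ha.const_smul R).intervalIntegrable 0 R) (hra.intervalIntegrable 0 R)]
    simp only [sub_smul]
  have hderiv := ((hasDerivAt_id R).smul (ha.integral_hasStrictDerivAt 0 R).hasDerivAt).sub
    (hra.integral_hasStrictDerivAt 0 R).hasDerivAt
  simpa [funext hsplit, Pi.smul_def, Pi.sub_def] using hderiv

theorem integral_eq_of_forall_integral_sub_smul_eq (ha : Continuous a) (hb : Continuous b)
    (hab : ∀ R > 0, ∫ r in 0..R, (R - r) • a r = ∫ r in 0..R, b r) {R : ℝ} (hR : 0 < R) :
    ∫ r in 0..R, a r = b R :=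
  have hab' : (fun R ↦ ∫ r in 0..R, b r) =ᶠ[nhds R] fun R ↦ ∫ r in 0..R, (R - r) • a r :=
    (eventually_gt_nhds hR).mono fun S hS ↦ (hab S hS).symm
  ((hasDerivAt_integral_sub_smul ha R).congr_of_eventuallyEq hab').unique
    (hb.integral_hasStrictDerivAt 0 R).hasDerivAt

end TriangularKernel

section Tent

variable {E : Type*} [NormedAddCommGroup E] {R : ℝ} {u : E}

/-- The conical tent over the ball of radius `R` centred at the origin. As a Lipschitz cutoff
supported in that ball, it serves as a test function for integration by parts. -/
def tent (R : ℝ) (u : E) : ℝ := max (R - ‖u‖) 0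

lemma tent_of_mem_ball (hu : u ∈ ball 0 R) : tent R u = R - ‖u‖ :=
  max_eq_left (sub_nonneg.2 (mem_ball_zero_iff.1 hu).le)

lemma tent_of_notMem_ball (hu : u ∉ ball 0 R) : tent R u = 0 :=
  max_eq_right (sub_nonpos.2 (by simpa using hu))

lemma lipschitzWith_tent : LipschitzWith 1 (tent R : E → ℝ) := by
  have hsub : LipschitzWith 1 fun u : E ↦ R - ‖u‖ := by
    simpa using (LipschitzWith.const R).sub lipschitzWith_one_norm
  exact hsub.max_const 0

lemma hasCompactSupport_tent [ProperSpace E] : HasCompactSupport (tent R : E → ℝ) :=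
  .intro (isCompact_closedBall 0 R) fun _ hu ↦
    tent_of_notMem_ball fun hu' ↦ hu (ball_subset_closedBall hu')

variable [NormedSpace ℝ E]

lemma fderiv_tent_of_mem_ball (hu : u ∈ ball 0 R) :
    fderiv ℝ (tent R) u = -fderiv ℝ (fun w : E ↦ ‖w‖) u := by
  have htent : tent R =ᶠ[nhds u] fun w ↦ R - ‖w‖ :=
    (isOpen_ball.eventually_mem hu).mono fun _ ↦ tent_of_mem_ball
  rw [htent.fderiv_eq, fderiv_const_sub]

lemma fderiv_tent_of_notMem_ball (hu : u ∉ ball 0 R) : fderiv ℝ (tent R) u = 0 := by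
  have hmin : IsLocalMin (tent R) u :=
    .of_forall fun w ↦ (tent_of_notMem_ball hu).trans_le (le_max_right _ _)
  exact hmin.fderiv_eq_zero

end Tent

lemma integrableOn_ball_of_continuous {X F : Type*} [MetricSpace X] [ProperSpace X]
    [MeasurableSpace X] [OpensMeasurableSpace X] [NormedAddCommGroup F] (μ : Measure X)
    [IsFiniteMeasureOnCompacts μ] {f : X → F} (hf : Continuous f) (x : X) (r : ℝ) :
    IntegrableOn f (ball x r) μ :=
  (hf.continuousOn.integrableOn_compact (isCompact_closedBall x r)).mono_set
    ball_subset_closedBall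

section DivergenceTheorem

variable {E : Type*} [NormedAddCommGroup E] [NormedSpace ℝ E]

lemma norm_fderiv_norm_apply_le (u v : E) : ‖fderiv ℝ (fun w : E ↦ ‖w‖) u v‖ ≤ ‖v‖ := by
  simpa using (fderiv ℝ (fun w : E ↦ ‖w‖) u).le_of_opNorm_le
    (norm_fderiv_le_of_lipschitz ℝ lipschitzWith_one_norm) v

variable [MeasurableSpace E] [BorelSpace E]

lemma integrable_fderiv_norm_mul {ν : Measure E} {g : E → ℝ} (hg : Integrable g ν) (v : E) :
    Integrable (fun u ↦ fderiv ℝ (fun w : E ↦ ‖w‖) u v * g u) ν :=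
  hg.bdd_mul (measurable_fderiv_apply_const ℝ _ v).aestronglyMeasurable
    (.of_forall fun u ↦ norm_fderiv_norm_apply_le u v)

variable [FiniteDimensional ℝ E] (μ : Measure E) [μ.IsAddHaarMeasure]

lemma integral_fderiv_mul_eq_neg_of_lipschitzWith {f g : E → ℝ} {C D : NNReal}
    (hf : LipschitzWith C f) (hg : LipschitzWith D g) (hgc : HasCompactSupport g) (v : E) :
    ∫ u, fderiv ℝ f u v * g u ∂μ = -∫ u, fderiv ℝ g u v * f u ∂μ := by
  calc
    ∫ u, fderiv ℝ f u v * g u ∂μ = ∫ u, lineDeriv ℝ f u v * g u ∂μ := by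
      refine integral_congr_ae ?_
      filter_upwards [hf.ae_differentiableAt] with u hu
      rw [hu.lineDeriv_eq_fderiv]
    _ = ∫ u, lineDeriv ℝ g u (-v) * f u ∂μ := hf.integral_lineDeriv_mul_eq hg hgc v
    _ = ∫ u, -(fderiv ℝ g u v * f u) ∂μ := by
      refine integral_congr_ae ?_
      filter_upwards [hg.ae_differentiableAt] with u hu
      rw [hu.lineDeriv_eq_fderiv, map_neg, neg_mul]
    _ = -∫ u, fderiv ℝ g u v * f u ∂μ := integral_neg _

theorem setIntegral_ball_sub_norm_mul_fderiv {g : E → ℝ} {C : NNReal} {R : ℝ}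
    (hg : LipschitzOnWith C g (ball 0 R)) (v : E) :
    ∫ u in ball 0 R, (R - ‖u‖) * fderiv ℝ g u v ∂μ =
      ∫ u in ball 0 R, fderiv ℝ (fun w : E ↦ ‖w‖) u v * g u ∂μ := by
  obtain ⟨G, hG, hgG⟩ := hg.extend_real
  have hfderiv {u : E} (hu : u ∈ ball 0 R) : fderiv ℝ g u = fderiv ℝ G u :=
    (hgG.eventuallyEq_of_mem (isOpen_ball.mem_nhds hu)).fderiv_eq
  calc
    ∫ u in ball 0 R, (R - ‖u‖) * fderiv ℝ g u v ∂μ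
      = ∫ u in ball 0 R, fderiv ℝ G u v * tent R u ∂μ :=
        setIntegral_congr_fun measurableSet_ball fun u hu ↦ by
          simp only [tent_of_mem_ball hu, hfderiv hu, mul_comm]
    _ = ∫ u, fderiv ℝ G u v * tent R u ∂μ :=
        setIntegral_eq_integral_of_forall_compl_eq_zero fun u hu ↦ by
          rw [tent_of_notMem_ball hu, mul_zero]
    _ = ∫ u, -fderiv ℝ (tent R) u v * G u ∂μ := by
        simp_rw [neg_mul, integral_neg]
        exact integral_fderiv_mul_eq_neg_of_lipschitzWith μ hG lipschitzWith_tent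
          hasCompactSupport_tent v
    _ = ∫ u in ball 0 R, -fderiv ℝ (tent R) u v * G u ∂μ :=
        (setIntegral_eq_integral_of_forall_compl_eq_zero fun u hu ↦ by
          simp [fderiv_tent_of_notMem_ball hu]).symm
    _ = ∫ u in ball 0 R, fderiv ℝ (fun w : E ↦ ‖w‖) u v * g u ∂μ :=
        setIntegral_congr_fun measurableSet_ball fun u hu ↦ by
          simp [fderiv_tent_of_mem_ball hu, hgG hu]

lemma integrable_fderiv_norm_sphere (v : E) :
    Integrable (fun e : sphere (0 : E) 1 ↦ fderiv ℝ (fun w : E ↦ ‖w‖) (e : E) v) μ.toSphere :=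
  .of_bound ((measurable_fderiv_apply_const ℝ _ v).comp
    measurable_subtype_coe).aestronglyMeasurable ‖v‖
    (.of_forall fun e ↦ norm_fderiv_norm_apply_le (e : E) v)

variable [Nontrivial E] {g : E → ℝ} {R : ℝ}

lemma integral_sub_smul_integral_sphere_fderiv (hg : ContDiff ℝ 1 g) (v : E) (hR : 0 < R) :
    ∫ r in 0..R, (R - r) • r ^ (finrank ℝ E - 1) •
        ∫ e : sphere (0 : E) 1, fderiv ℝ g (r • (e : E)) v ∂μ.toSphere =
      ∫ r in 0..R, r ^ (finrank ℝ E - 1) • ∫ e : sphere (0 : E) 1,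
        fderiv ℝ (fun w : E ↦ ‖w‖) (e : E) v • g (r • (e : E)) ∂μ.toSphere := by
  obtain ⟨C, hC⟩ := hg.contDiffOn.exists_lipschitzOnWith one_ne_zero
    (convex_closedBall (0 : E) R) (isCompact_closedBall 0 R)
  have hcont : Continuous fun u ↦ (R - ‖u‖) * fderiv ℝ g u v :=
    (continuous_const.sub continuous_norm).mul
      ((hg.continuous_fderiv one_ne_zero).clm_apply continuous_const)
  have hpos {r : ℝ} (hr : r ∈ uIoo 0 R) : 0 < r := by
    rw [uIoo_of_le hR.le] at hr
    exact hr.1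
  calc
    _ = ∫ r in 0..R, r ^ (finrank ℝ E - 1) • ∫ e : sphere (0 : E) 1,
        (R - ‖r • (e : E)‖) * fderiv ℝ g (r • (e : E)) v ∂μ.toSphere :=
      intervalIntegral.integral_congr_uIoo fun r hr ↦ by
        simp [norm_smul, abs_of_pos (hpos hr), integral_const_mul, mul_left_comm]
    _ = ∫ u in ball 0 R, (R - ‖u‖) * fderiv ℝ g u v ∂μ :=
      (setIntegral_ball_eq_integral_integral_sphere μ hR.le
        (integrableOn_ball_of_continuous μ hcont 0 R)).symm
    _ = ∫ u in ball 0 R, fderiv ℝ (fun w : E ↦ ‖w‖) u v * g u ∂μ :=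
      setIntegral_ball_sub_norm_mul_fderiv μ (hC.mono ball_subset_closedBall) v
    _ = ∫ r in 0..R, r ^ (finrank ℝ E - 1) • ∫ e : sphere (0 : E) 1,
        fderiv ℝ (fun w : E ↦ ‖w‖) (r • (e : E)) v * g (r • (e : E)) ∂μ.toSphere :=
      setIntegral_ball_eq_integral_integral_sphere μ hR.le
        (integrable_fderiv_norm_mul (integrableOn_ball_of_continuous μ hg.continuous 0 R) v)
    _ = _ := intervalIntegral.integral_congr_uIoo fun r hr ↦ by
      simp only [fderiv_norm_smul_pos (hpos hr), smul_eq_mul]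

theorem setIntegral_ball_fderiv (hg : ContDiff ℝ 1 g) (v : E) (hR : 0 < R) :
    ∫ u in ball 0 R, fderiv ℝ g u v ∂μ = R ^ (finrank ℝ E - 1) • ∫ e : sphere (0 : E) 1,
      fderiv ℝ (fun w : E ↦ ‖w‖) (e : E) v • g (R • (e : E)) ∂μ.toSphere := by
  have hg' : Continuous fun u ↦ fderiv ℝ g u v :=
    (hg.continuous_fderiv one_ne_zero).clm_apply continuous_const
  have hleft : Continuous fun r : ℝ ↦
      ∫ e : sphere (0 : E) 1, fderiv ℝ g (r • (e : E)) v ∂μ.toSphere := by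
    simpa using continuous_integral_sphere_smul μ (integrable_const 1) hg'
  have hright := continuous_integral_sphere_smul μ (integrable_fderiv_norm_sphere μ v)
    hg.continuous
  rw [setIntegral_ball_eq_integral_integral_sphere μ hR.le
    (integrableOn_ball_of_continuous μ hg' 0 R)]
  exact integral_eq_of_forall_integral_sub_smul_eq ((continuous_pow _).smul hleft)
    ((continuous_pow _).smul hright)
    (fun _ hS ↦ integral_sub_smul_integral_sphere_fderiv μ hg v hS) hR

end DivergenceTheorem

section InnerProductSpace

variable {E : Type*} [NormedAddCommGroup E] [InnerProductSpace ℝ E]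

lemma norm_mul_fderiv_norm_apply {u : E} (hu : u ≠ 0) (v : E) :
    ‖u‖ * fderiv ℝ (fun w : E ↦ ‖w‖) u v = inner ℝ u v := by
  have hnorm : DifferentiableAt ℝ (fun w : E ↦ ‖w‖) u := (differentiableAt_id (𝕜 := ℝ)).norm ℝ hu
  have hsq := congrArg (· v) ((hnorm.hasFDerivAt.pow 2).unique
    (hasStrictFDerivAt_norm_sq u).hasFDerivAt)
  simpa [mul_assoc] using hsq

variable [CompleteSpace E]

lemma gradient_comp_add_smul (h : E → ℝ) (x : E) (γ : ℝ) (u : E) :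
    gradient (fun w ↦ h (x + γ • w)) u = γ • gradient h (x + γ • u) := by
  simp only [gradient, fderiv_comp_smul (f := fun w ↦ h (x + w)), fderiv_comp_add_left, map_smul]

end InnerProductSpace

section Gradient

variable {E : Type*} [NormedAddCommGroup E] [InnerProductSpace ℝ E] [FiniteDimensional ℝ E]
  [Nontrivial E] [MeasurableSpace E] [BorelSpace E] (μ : Measure E) [μ.IsAddHaarMeasure]

theorem setIntegral_ball_gradient {g : E → ℝ} (hg : ContDiff ℝ 1 g) {R : ℝ} (hR : 0 < R) :
    ∫ u in ball 0 R, gradient g u ∂μ =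
      R ^ (finrank ℝ E - 1) • ∫ e, g (R • (e : E)) • (e : E) ∂μ.toSphere := by
  have hgrad : Continuous (gradient g) :=
    (InnerProductSpace.toDual ℝ E).symm.continuous.comp (hg.continuous_fderiv one_ne_zero)
  have hgc := hg.continuous
  have hsphere : Integrable (fun e : sphere (0 : E) 1 ↦ g (R • (e : E)) • (e : E)) μ.toSphere :=
    Continuous.integrable_of_hasCompactSupport (by fun_prop) (.of_compactSpace _)
  refine ext_inner_left ℝ fun v ↦ ?_
  calc
    inner ℝ v (∫ u in ball 0 R, gradient g u ∂μ) = ∫ u in ball 0 R, fderiv ℝ g u v ∂μ := by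
      rw [← integral_inner (integrableOn_ball_of_continuous μ hgrad 0 R)]
      simp only [inner_gradient_right, conj_trivial]
    _ = R ^ (finrank ℝ E - 1) • ∫ e : sphere (0 : E) 1,
        fderiv ℝ (fun w : E ↦ ‖w‖) (e : E) v • g (R • (e : E)) ∂μ.toSphere :=
      setIntegral_ball_fderiv μ hg v hR
    _ = R ^ (finrank ℝ E - 1) • ∫ e : sphere (0 : E) 1,
        inner ℝ v (g (R • (e : E)) • (e : E)) ∂μ.toSphere := by
      congr 2 with e
      have he := norm_mul_fderiv_norm_apply (ne_zero_of_mem_unit_sphere e) v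
      rw [norm_eq_of_mem_sphere, one_mul] at he
      rw [he, inner_smul_right, real_inner_comm, smul_eq_mul, mul_comm]
    _ = _ := by rw [integral_inner hsphere, inner_smul_right, smul_eq_mul]

theorem stmt19_general {h : E → ℝ} (hh : ContDiff ℝ 1 h) (x : E) {γ : ℝ} (hγ : γ ≠ 0) :
    ⨍ e : sphere (0 : E) 1, ((finrank ℝ E : ℝ) / γ * h (x + γ • (e : E))) • (e : E) ∂μ.toSphere =
      ⨍ u in ball 0 1, gradient h (x + γ • u) ∂μ := by
  have hdim : (finrank ℝ E : ℝ) ≠ 0 := Nat.cast_ne_zero.2 finrank_pos.ne'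
  have hstokes : γ • ∫ u in ball 0 1, gradient h (x + γ • u) ∂μ =
      ∫ e, h (x + γ • (e : E)) • (e : E) ∂μ.toSphere := by
    simpa [gradient_comp_add_smul, integral_smul] using
      setIntegral_ball_gradient μ (g := fun u ↦ h (x + γ • u)) (by fun_prop) one_pos
  rw [average_eq, setAverage_eq]
  simp_rw [mul_smul, integral_smul, ← hstokes,
    Measure.toSphere_real_apply_univ, smul_smul]
  congr 1
  field_simp

end Gradient

lemma integral_sphereUniform {F : Type*} [NormedAddCommGroup F] [NormedSpace ℝ F] (d : ℕ)
    (f : EuclideanSpace ℝ (Fin d) → F) :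
    ∫ e, f e ∂(sphereUniform d) =
      ⨍ e : sphere (0 : EuclideanSpace ℝ (Fin d)) 1, f e ∂(volume.toSphere) := by
  rw [sphereUniform, average, ← Measure.map_smul,
    (MeasurableEmbedding.subtype_coe isClosed_sphere.measurableSet).integral_map]

lemma integral_ballUniform {F : Type*} [NormedAddCommGroup F] [NormedSpace ℝ F] (d : ℕ)
    (f : EuclideanSpace ℝ (Fin d) → F) :
    ∫ u, f u ∂(ballUniform d) = ⨍ u in ball 0 1, f u := by
  rw [ballUniform, average, Measure.restrict_apply_univ]

/-- Spherical Stokes/divergence identity: for `e` uniform on the unit sphere and `u` uniform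
on the unit ball, `E[(d/γ) h(x + γe) e] = E[∇h(x + γu)]`. -/
theorem stmt19 (d : ℕ) (hd : 0 < d) (h : EuclideanSpace ℝ (Fin d) → ℝ)
    (hh : ContDiff ℝ 1 h) (x : EuclideanSpace ℝ (Fin d)) (γ : ℝ) (hγ : 0 < γ) :
    ∫ e, (((d : ℝ) / γ) * h (x + γ • e)) • e ∂(sphereUniform d)
      = ∫ u, gradient h (x + γ • u) ∂(ballUniform d) := by
  have : NeZero d := ⟨hd.ne'⟩
  simpa [integral_sphereUniform, integral_ballUniform] using stmt19_general volume hh x hγ.ne'
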